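/- Let A(u) = (3/16)u⁻² on U = {(u,v,y,z) ∈ ℝ⁴ : u > 0} and consider the conformally flat plane wave metric 2H = A(u)(y² + z²). Then each of the following six symmetric tensor fields is an irreducible Killing tensor of g (here A' = dA/du, and 'with y↔z' means the tensor obtained by interchanging y and z both in coefficients and in indices): (K₁)_{ab} = [−(4/3)A^{3/4} yzv + (1/2)A' A^{−1/4} yz(y²+z²)] δ^u_a δ^u_b + A^{−5/4}A' yz δ_{(a}^u δ_{b)}^v + [−(1/2)A^{−5/4}A' zv + (2/3)A^{3/4} z(3y²+z²)] δ_{(a}^u δ_{b)}^y + [−(1/2)A^{−5/4}A' yv + (2/3)A^{3/4} y(y²+3z²)] δ_{(a}^u δ_{b)}^z + 2A^{−1/4} z δ_{(a}^v δ_{b)}^y + 2A^{−1/4} y δ_{(a}^v δ_{b)}^z − 4A^{−1/4} v δ_{(a}^y δ_{b)}^z; (K₂)_{ab} = [−(1/8)u^{−3/2}vy² − (3/32)u^{−5/2}y²(y²+z²)] δ^u_a δ^u_b − u^{−1/2}y² δ_{(a}^u δ_{b)}^v + (1/8)u^{−3/2}y²z δ_{(a}^u δ_{b)}^z + (u^{−1/2}vy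 + (1/4)u^{−3/2}y³ + (1/8)u^{−3/2}yz²) δ_{(a}^u δ_{b)}^y + 2u^{1/2}y δ_{(a}^v δ_{b)}^y + (−2u^{1/2}v + (1/4)u^{−1/2}z²) δ^y_a δ^y_b − (1/2)u^{−1/2}yz δ_{(a}^y δ_{b)}^z + (1/4)u^{−1/2}y² δ^z_a δ^z_b; K₃ = K₂ with y↔z; (K₄)_{ab} = [−(3/16)u^{−2}v(y²+z²) + (7/128)u^{−3}(y²+z²)²] δ^u_a δ^u_b + [−2v + (3/4)u^{−1}(y²+z²)] δ_{(a}^u δ_{b)}^v + 2u δ^v_a δ^v_b − (1/8)u^{−2}y(y²+z²) δ_{(a}^u δ_{b)}^y − (1/8)u^{−2}z(y²+z²) δ_{(a}^u δ_{b)}^z − y δ_{(a}^v δ_{b)}^y − z δ_{(a}^v δ_{b)}^z + (1/4)u^{−1}yz δ_{(a}^y δ_{b)}^z + (v − (1/8)u^{−1}z²) δ^y_a δ^y_b + (v − (1/8)u^{−1}y²) δ^z_a δ^z_b; (K₈)_{ab} = −(2AΓ' + (1/3)A'Γ) y(y²+z²) δ^u_a δ^u_b − 2Γ' y δ_{(a}^u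 δ_{b)}^v + (2/3)AΓ(3y²+2z²) δ_{(a}^u δ_{b)}^y + (2/3)AΓ yz δ_{(a}^u δ_{b)}^z + 2Γ δ_{(a}^v δ_{b)}^y − (2/3)Γ' z δ_{(a}^y δ_{b)}^z + (2/3)Γ' y δ^z_a δ^z_b where Γ(u) = u^{3/4}; K₁₀ = K₈ with y↔z. -/

import Mathlib

noncomputable section

/-- Points of (an open subset of) `ℝ⁴`, with coordinates `(u,v,y,z)` indexed by `0,1,2,3`. -/
abbrev Pt : Type := Fin 4 → ℝ

/-- Partial derivative of a function in the `i`-th coordinate direction. -/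
def pd (i : Fin 4) (f : Pt → ℝ) (p : Pt) : ℝ :=
  fderiv ℝ f p (Pi.single i 1)

/-- Kronecker delta `δ^i_a`. -/
def kd (i a : Fin 4) : ℝ := if i = a then 1 else 0

/-- Symmetrized product of Kronecker deltas, `δ_{(a}^i δ_{b)}^j`. -/
def sd (i j a b : Fin 4) : ℝ := (kd i a * kd j b + kd j a * kd i b) / 2

/-- Components of the pp-wave metric `g = -2 du dv - 2H du² + dy² + dz²`. -/
def ppMetric (H : Pt → ℝ) (p : Pt) (a b : Fin 4) : ℝ :=
  if a = 0 ∧ b = 0 then -2 * H p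
  else if (a = 0 ∧ b = 1) ∨ (a = 1 ∧ b = 0) then -1
  else if (a = 2 ∧ b = 2) ∨ (a = 3 ∧ b = 3) then 1
  else 0

/-- Christoffel symbols `Γ^d_{ab}` of the pp-wave metric:
`Γ^v_{uu} = H_{,u}`, `Γ^y_{uu} = Γ^v_{uy} = Γ^v_{yu} = H_{,y}`,
`Γ^z_{uu} = Γ^v_{uz} = Γ^v_{zu} = H_{,z}`, all others zero. -/
def Gamma (H : Pt → ℝ) (p : Pt) (d a b : Fin 4) : ℝ :=
  if d = 1 ∧ a = 0 ∧ b = 0 then pd 0 H p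
  else if (d = 2 ∧ a = 0 ∧ b = 0) ∨ (d = 1 ∧ ((a = 0 ∧ b = 2) ∨ (a = 2 ∧ b = 0))) then pd 2 H p
  else if (d = 3 ∧ a = 0 ∧ b = 0) ∨ (d = 1 ∧ ((a = 0 ∧ b = 3) ∨ (a = 3 ∧ b = 0))) then pd 3 H p
  else 0

/-- Covariant derivative of a covector field: `∇_a X_b = ∂_a X_b - Γ^d_{ab} X_d`. -/
def covD1 (H : Pt → ℝ) (X : Pt → Fin 4 → ℝ) (p : Pt) (a b : Fin 4) : ℝ :=
  pd a (fun q => X q b) p - ∑ d, Gamma H p d a b * X p d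

/-- Covariant derivative of a 2-tensor field:
`∇_c T_{ab} = ∂_c T_{ab} - Γ^d_{ca} T_{db} - Γ^d_{cb} T_{ad}`. -/
def covD2 (H : Pt → ℝ) (T : Pt → Fin 4 → Fin 4 → ℝ) (p : Pt) (c a b : Fin 4) : ℝ :=
  pd c (fun q => T q a b) p - ∑ d, Gamma H p d c a * T p d b
    - ∑ d, Gamma H p d c b * T p a d

/-- A Killing vector of the pp-wave metric on `U`, given by its covariant components:
a smooth covector field with `∇_{(a}X_{b)} = 0` on `U`. -/
def IsKillingVector (H : Pt → ℝ) (U : Set Pt) (X : Pt → Fin 4 → ℝ) : Prop :=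
  (∀ a, ContDiffOn ℝ (⊤ : ℕ∞) (fun p => X p a) U) ∧
  ∀ p ∈ U, ∀ a b, covD1 H X p a b + covD1 H X p b a = 0

/-- A (second order) Killing tensor of the pp-wave metric on `U`: a smooth symmetric
2-tensor field with `∇_{(c}K_{ab)} = 0` on `U`. -/
def IsKillingTensor (H : Pt → ℝ) (U : Set Pt) (K : Pt → Fin 4 → Fin 4 → ℝ) : Prop :=
  (∀ a b, ContDiffOn ℝ (⊤ : ℕ∞) (fun p => K p a b) U) ∧
  (∀ p a b, K p a b = K p b a) ∧
  ∀ p ∈ U, ∀ a b c,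
    covD2 H K p c a b + covD2 H K p a b c + covD2 H K p b c a = 0

/-- A Killing tensor is reducible if (on `U`) it is a constant-coefficient linear combination
of the metric `g_{ab}` and finitely many symmetrized products `X_{(a}Y_{b)}` of Killing
vectors `X`, `Y`. -/
def IsReducible (H : Pt → ℝ) (U : Set Pt) (K : Pt → Fin 4 → Fin 4 → ℝ) : Prop :=
  ∃ (c₀ : ℝ) (n : ℕ) (c : Fin n → ℝ) (X Y : Fin n → Pt → Fin 4 → ℝ),
    (∀ i, IsKillingVector H U (X i)) ∧ (∀ i, IsKillingVector H U (Y i)) ∧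
    ∀ p ∈ U, ∀ a b, K p a b =
      c₀ * ppMetric H p a b + ∑ i, c i * ((X i p a * Y i p b + X i p b * Y i p a) / 2)


/-- The coordinate swap `y ↔ z` on indices. -/
def swp : Fin 4 → Fin 4 := fun i => Equiv.swap (2 : Fin 4) 3 i

/-- Interchange `y` and `z`, both in the coefficients and in the indices of a tensor. -/
def swapYZ (K : Pt → Fin 4 → Fin 4 → ℝ) : Pt → Fin 4 → Fin 4 → ℝ :=
  fun p a b => K (fun i => p (swp i)) (swp a) (swp b)

/-- The Killing tensor `K₁` of a conformally flat plane wave with profile `A(u)`. -/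
def KTone (A : ℝ → ℝ) : Pt → Fin 4 → Fin 4 → ℝ := fun p a b =>
  (-(4 / 3) * A (p 0) ^ ((3 : ℝ) / 4) * p 2 * p 3 * p 1
      + (1 / 2) * deriv A (p 0) * A (p 0) ^ (-(1 : ℝ) / 4) * p 2 * p 3
        * ((p 2) ^ 2 + (p 3) ^ 2)) * sd 0 0 a b
    + A (p 0) ^ (-(5 : ℝ) / 4) * deriv A (p 0) * p 2 * p 3 * sd 0 1 a b
    + (-(1 / 2) * A (p 0) ^ (-(5 : ℝ) / 4) * deriv A (p 0) * p 3 * p 1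
        + (2 / 3) * A (p 0) ^ ((3 : ℝ) / 4) * p 3 * (3 * (p 2) ^ 2 + (p 3) ^ 2))
      * sd 0 2 a b
    + (-(1 / 2) * A (p 0) ^ (-(5 : ℝ) / 4) * deriv A (p 0) * p 2 * p 1
        + (2 / 3) * A (p 0) ^ ((3 : ℝ) / 4) * p 2 * ((p 2) ^ 2 + 3 * (p 3) ^ 2))
      * sd 0 3 a b
    + 2 * A (p 0) ^ (-(1 : ℝ) / 4) * p 3 * sd 1 2 a b
    + 2 * A (p 0) ^ (-(1 : ℝ) / 4) * p 2 * sd 1 3 a b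
    - 4 * A (p 0) ^ (-(1 : ℝ) / 4) * p 1 * sd 2 3 a b

/-- The Killing tensor `K₂` of the conformally flat plane wave with `A = (3/16)u⁻²`. -/
def KTtwo : Pt → Fin 4 → Fin 4 → ℝ := fun p a b =>
  (-(1 / 8) * (p 0) ^ (-(3 : ℝ) / 2) * p 1 * (p 2) ^ 2
      - (3 / 32) * (p 0) ^ (-(5 : ℝ) / 2) * (p 2) ^ 2 * ((p 2) ^ 2 + (p 3) ^ 2))
    * sd 0 0 a b
  - (p 0) ^ (-(1 : ℝ) / 2) * (p 2) ^ 2 * sd 0 1 a b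
  + (1 / 8) * (p 0) ^ (-(3 : ℝ) / 2) * (p 2) ^ 2 * p 3 * sd 0 3 a b
  + ((p 0) ^ (-(1 : ℝ) / 2) * p 1 * p 2 + (1 / 4) * (p 0) ^ (-(3 : ℝ) / 2) * (p 2) ^ 3
      + (1 / 8) * (p 0) ^ (-(3 : ℝ) / 2) * p 2 * (p 3) ^ 2) * sd 0 2 a b
  + 2 * (p 0) ^ ((1 : ℝ) / 2) * p 2 * sd 1 2 a b
  + (-2 * (p 0) ^ ((1 : ℝ) / 2) * p 1 + (1 / 4) * (p 0) ^ (-(1 : ℝ) / 2) * (p 3) ^ 2)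
    * sd 2 2 a b
  - (1 / 2) * (p 0) ^ (-(1 : ℝ) / 2) * p 2 * p 3 * sd 2 3 a b
  + (1 / 4) * (p 0) ^ (-(1 : ℝ) / 2) * (p 2) ^ 2 * sd 3 3 a b

/-- The Killing tensor `K₄` of the conformally flat plane wave with `A = (3/16)u⁻²`. -/
def KTfour : Pt → Fin 4 → Fin 4 → ℝ := fun p a b =>
  (-(3 / 16) * p 1 * ((p 2) ^ 2 + (p 3) ^ 2) / (p 0) ^ 2
      + (7 / 128) * ((p 2) ^ 2 + (p 3) ^ 2) ^ 2 / (p 0) ^ 3) * sd 0 0 a b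
  + (-2 * p 1 + (3 / 4) * ((p 2) ^ 2 + (p 3) ^ 2) / p 0) * sd 0 1 a b
  + 2 * p 0 * sd 1 1 a b
  - (1 / 8) * p 2 * ((p 2) ^ 2 + (p 3) ^ 2) / (p 0) ^ 2 * sd 0 2 a b
  - (1 / 8) * p 3 * ((p 2) ^ 2 + (p 3) ^ 2) / (p 0) ^ 2 * sd 0 3 a b
  - p 2 * sd 1 2 a b - p 3 * sd 1 3 a b
  + (1 / 4) * p 2 * p 3 / p 0 * sd 2 3 a b
  + (p 1 - (1 / 8) * (p 3) ^ 2 / p 0) * sd 2 2 a b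
  + (p 1 - (1 / 8) * (p 2) ^ 2 / p 0) * sd 3 3 a b

/-- The Killing tensor `K₈` of a conformally flat plane wave with profile `A(u)`,
built from a function `Γ(u)`. -/
def KTeight (A Γf : ℝ → ℝ) : Pt → Fin 4 → Fin 4 → ℝ := fun p a b =>
  -(2 * A (p 0) * deriv Γf (p 0) + (1 / 3) * deriv A (p 0) * Γf (p 0))
      * p 2 * ((p 2) ^ 2 + (p 3) ^ 2) * sd 0 0 a b
    - 2 * deriv Γf (p 0) * p 2 * sd 0 1 a b
    + (2 / 3) * A (p 0) * Γf (p 0) * (3 * (p 2) ^ 2 + 2 * (p 3) ^ 2) * sd 0 2 a b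
    + (2 / 3) * A (p 0) * Γf (p 0) * p 2 * p 3 * sd 0 3 a b
    + 2 * Γf (p 0) * sd 1 2 a b
    - (2 / 3) * deriv Γf (p 0) * p 3 * sd 2 3 a b
    + (2 / 3) * deriv Γf (p 0) * p 2 * sd 3 3 a b


namespace KTP

set_option linter.unusedSimpArgs false

/-- The half space `u > 0`. -/
def UU : Set Pt := {p | 0 < p 0}

lemma isOpen_UU : IsOpen UU := isOpen_lt continuous_const (continuous_apply 0)

/-- Smooth functions on the half space. -/
def Sm (f : Pt → ℝ) : Prop := ContDiffOn ℝ (⊤ : ℕ∞) f UU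

lemma Sm.diff {f : Pt → ℝ} (h : Sm f) {p : Pt} (hp : p ∈ UU) : DifferentiableAt ℝ f p :=
  (h.contDiffAt (isOpen_UU.mem_nhds hp)).differentiableAt (by simp)

lemma Sm.pd {f : Pt → ℝ} (h : Sm f) (i : Fin 4) : Sm (pd i f) := by
  have h1 : ContDiffOn ℝ (⊤ : ℕ∞) (fderiv ℝ f) UU :=
    h.fderiv_of_isOpen isOpen_UU (by simp)
  exact h1.clm_apply contDiffOn_const

lemma pd_congr {f g : Pt → ℝ} (h : ∀ p ∈ UU, f p = g p) (i : Fin 4) :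
    ∀ p ∈ UU, pd i f p = pd i g p := by
  intro p hp
  unfold _root_.pd
  rw [Filter.EventuallyEq.fderiv_eq]
  exact Filter.eventually_of_mem (isOpen_UU.mem_nhds hp) h

lemma pd_fun_pd (i j : Fin 4) {f : Pt → ℝ} (h : Sm f) {p : Pt} (hp : p ∈ UU) :
    pd i (pd j f) p = fderiv ℝ (fderiv ℝ f) p (Pi.single i 1) (Pi.single j 1) := by
  have h1 : ContDiffOn ℝ (⊤ : ℕ∞) (fderiv ℝ f) UU :=
    h.fderiv_of_isOpen isOpen_UU (by simp)
  have h2 : DifferentiableAt ℝ (fderiv ℝ f) p :=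
    (h1.contDiffAt (isOpen_UU.mem_nhds hp)).differentiableAt (by simp)
  have h3 := h2.hasFDerivAt.clm_apply (hasFDerivAt_const (Pi.single j (1 : ℝ) : Pt) p)
  have : (_root_.pd j f) = fun y => (fderiv ℝ f y) (Pi.single j (1 : ℝ) : Pt) := rfl
  rw [this]
  unfold _root_.pd
  rw [h3.fderiv]
  simp

lemma pd_comm (i j : Fin 4) {f : Pt → ℝ} (h : Sm f) {p : Pt} (hp : p ∈ UU) :
    pd i (pd j f) p = pd j (pd i f) p := by
  rw [pd_fun_pd i j h hp, pd_fun_pd j i h hp]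
  have : IsSymmSndFDerivAt ℝ f p :=
    (h.contDiffAt (isOpen_UU.mem_nhds hp)).isSymmSndFDerivAt (by
      rw [minSmoothness_of_isRCLikeNormedField]; 
      exact WithTop.coe_le_coe.2 (le_top : (2 : ℕ∞) ≤ ⊤))
  exact this _ _

lemma f01 : ((0 : Fin 4) = 1) = False := by simp
lemma f02 : ((0 : Fin 4) = 2) = False := by simp
lemma f03 : ((0 : Fin 4) = 3) = False := by simp
lemma f10 : ((1 : Fin 4) = 0) = False := by simp
lemma f12 : ((1 : Fin 4) = 2) = False := by simp
lemma f13 : ((1 : Fin 4) = 3) = False := by simp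
lemma f20 : ((2 : Fin 4) = 0) = False := by simp
lemma f21 : ((2 : Fin 4) = 1) = False := by simp
lemma f23 : ((2 : Fin 4) = 3) = False := by simp
lemma f30 : ((3 : Fin 4) = 0) = False := by simp
lemma f31 : ((3 : Fin 4) = 1) = False := by simp
lemma f32 : ((3 : Fin 4) = 2) = False := by simp

lemma pd_const (i : Fin 4) (c : ℝ) (p : Pt) : pd i (fun _ => c) p = 0 := by
  simp [pd]

lemma pd_coord (i j : Fin 4) (p : Pt) : pd i (fun q => q j) p = if j = i then 1 else 0 := by
  unfold pd
  rw [(hasFDerivAt_apply (𝕜 := ℝ) j p).fderiv]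
  simp [Pi.single_apply]

lemma pd_add {f g : Pt → ℝ} {p : Pt} (i : Fin 4) (hf : DifferentiableAt ℝ f p)
    (hg : DifferentiableAt ℝ g p) : pd i (fun q => f q + g q) p = pd i f p + pd i g p := by
  unfold pd; rw [fderiv_fun_add hf hg]; rfl

lemma pd_sub {f g : Pt → ℝ} {p : Pt} (i : Fin 4) (hf : DifferentiableAt ℝ f p)
    (hg : DifferentiableAt ℝ g p) : pd i (fun q => f q - g q) p = pd i f p - pd i g p := by
  unfold pd; rw [fderiv_fun_sub hf hg]; rfl

lemma pd_neg {f : Pt → ℝ} {p : Pt} (i : Fin 4) : pd i (fun q => - f q) p = - pd i f p := by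
  unfold pd; rw [fderiv_fun_neg]; rfl

lemma pd_mul {f g : Pt → ℝ} {p : Pt} (i : Fin 4) (hf : DifferentiableAt ℝ f p)
    (hg : DifferentiableAt ℝ g p) :
    pd i (fun q => f q * g q) p = f p * pd i g p + pd i f p * g p := by
  unfold pd; rw [fderiv_fun_mul hf hg]; simp [mul_comm]

lemma pd_pow {f : Pt → ℝ} {p : Pt} (i : Fin 4) (n : ℕ) (hf : DifferentiableAt ℝ f p) :
    pd i (fun q => f q ^ n) p = n * f p ^ (n - 1) * pd i f p := by
  unfold pd; rw [fderiv_fun_pow n hf]; simp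

lemma pd_sum {n : ℕ} {f : Fin n → Pt → ℝ} {p : Pt} (i : Fin 4)
    (hf : ∀ m, DifferentiableAt ℝ (f m) p) :
    pd i (fun q => ∑ m, f m q) p = ∑ m, pd i (f m) p := by
  unfold pd; rw [fderiv_fun_sum (fun m _ => hf m)]; simp

/-- functions of `u` only -/
lemma pd_u {s : ℝ → ℝ} {p : Pt} {s' : ℝ} (h : HasDerivAt s s' (p 0)) (i : Fin 4) :
    pd i (fun q => s (q 0)) p = if i = 0 then s' else 0 := by
  have := HasDerivAt.comp_hasFDerivAt (𝕜 := ℝ) p h (hasFDerivAt_apply (𝕜 := ℝ) (0 : Fin 4) p)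
  unfold pd
  have h2 : (fun q : Pt => s (q 0)) = s ∘ (fun q : Pt => q 0) := rfl
  rw [h2, this.fderiv]
  by_cases hi : i = 0 <;> simp [hi]

/-- `1/u` -/
def w (p : Pt) : ℝ := (p 0)⁻¹

lemma Sm_w : Sm w := by
  intro p hp
  refine ContDiffWithinAt.inv ?_ (ne_of_gt hp)
  exact (contDiff_apply ℝ ℝ (0 : Fin 4)).contDiffWithinAt

lemma pd_w {p : Pt} (hp : p ∈ UU) (i : Fin 4) : pd i w p = if i = 0 then - w p ^ 2 else 0 := by
  have := pd_u (p := p) (hasDerivAt_inv (ne_of_gt hp)) i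
  unfold w
  rw [this]
  simp

/-- The wave profile. -/
def HH (p : Pt) : ℝ := 3 / 16 / (p 0) ^ 2 * ((p 2) ^ 2 + (p 3) ^ 2) / 2

lemma HH_eq (p : Pt) : HH p = 3 / 32 * w p ^ 2 * ((p 2) ^ 2 + (p 3) ^ 2) := by
  unfold HH w
  rw [inv_pow]; ring

lemma pd_HH {p : Pt} (hp : p ∈ UU) :
    pd 0 HH p = - 3 / 16 * w p ^ 3 * ((p 2) ^ 2 + (p 3) ^ 2) ∧ pd 2 HH p = 3 / 16 * w p ^ 2 * p 2
    ∧ pd 3 HH p = 3 / 16 * w p ^ 2 * p 3 := by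
  have hw := Sm_w.diff hp
  have : HH = fun p => 3 / 32 * w p ^ 2 * ((p 2) ^ 2 + (p 3) ^ 2) := funext HH_eq
  rw [this]
  refine ⟨?_, ?_, ?_⟩ <;>
  · rw [pd_mul _ (by fun_prop) (by fun_prop), pd_mul _ (by fun_prop) (by fun_prop),
      pd_add _ (by fun_prop) (by fun_prop), pd_pow _ _ (by fun_prop), pd_pow _ _ (by fun_prop),
      pd_pow _ _ (by fun_prop), pd_coord, pd_coord, pd_const, pd_w hp]
    simp only [f20, f23, f30, f32, if_true, if_false]
    simp only [pow_one, Nat.add_one_sub_one, Nat.cast_ofNat, Nat.reduceSub]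
    ring

end KTP

namespace KTP

set_option linter.unusedSimpArgs false

lemma Gamma_symm (H : Pt → ℝ) (p : Pt) (d a b : Fin 4) : Gamma H p d a b = Gamma H p d b a := by
  fin_cases d <;> fin_cases a <;> fin_cases b <;>
    simp [Gamma, f01, f02, f03, f10, f12, f13, f20, f21, f23, f30, f31, f32]

/-- It suffices to check the Killing tensor equation for ordered indices. -/
lemma ordered {E : Fin 4 → Fin 4 → Fin 4 → Prop} (h1 : ∀ a b c, E a b c → E b a c)
    (h2 : ∀ a b c, E a b c → E a c b) (h : ∀ a b c, a ≤ b → b ≤ c → E a b c) : ∀ a b c, E a b c := by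
  intro a b c
  rcases le_total a b with hab | hab <;> rcases le_total b c with hbc | hbc <;>
    rcases le_total a c with hac | hac
  · exact h _ _ _ hab hbc
  · exact h _ _ _ hab hbc
  · exact h2 _ _ _ (h _ _ _ hac hbc)
  · exact h2 _ _ _ (h1 _ _ _ (h _ _ _ hac hab))
  · exact h1 _ _ _ (h _ _ _ hab hac)
  · exact h1 _ _ _ (h2 _ _ _ (h _ _ _ hbc hac))
  · exact h1 _ _ _ (h2 _ _ _ (h1 _ _ _ (h _ _ _ hbc hab)))
  · exact h1 _ _ _ (h2 _ _ _ (h1 _ _ _ (h _ _ _ hbc hab)))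

lemma killing_of {K : Pt → Fin 4 → Fin 4 → ℝ} (hsym : ∀ p a b, K p a b = K p b a)
    (k00 k01 k02 k03 k11 k12 k13 k22 k23 k33 : Pt → ℝ)
    (hK : ∀ p ∈ UU, K p 0 0 = k00 p ∧ K p 0 1 = k01 p ∧ K p 0 2 = k02 p ∧ K p 0 3 = k03 p ∧
      K p 1 1 = k11 p ∧ K p 1 2 = k12 p ∧ K p 1 3 = k13 p ∧ K p 2 2 = k22 p ∧ K p 2 3 = k23 p ∧
      K p 3 3 = k33 p)
    (hS : Sm k00 ∧ Sm k01 ∧ Sm k02 ∧ Sm k03 ∧ Sm k11 ∧ Sm k12 ∧ Sm k13 ∧ Sm k22 ∧ Sm k23 ∧ Sm k33)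
    (hE : ∀ p ∈ UU,
      (pd 0 k00 p = 2 * (pd 0 HH p * k01 p + pd 2 HH p * k02 p + pd 3 HH p * k03 p)) ∧
      (2 * pd 0 k01 p + pd 1 k00 p
        = 2 * (pd 0 HH p * k11 p + pd 2 HH p * k12 p + pd 3 HH p * k13 p)) ∧
      (2 * pd 0 k02 p + pd 2 k00 p
        = 2 * (pd 0 HH p * k12 p + pd 2 HH p * k22 p + pd 3 HH p * k23 p)
          + 4 * pd 2 HH p * k01 p) ∧
      (2 * pd 0 k03 p + pd 3 k00 p
        = 2 * (pd 0 HH p * k13 p + pd 2 HH p * k23 p + pd 3 HH p * k33 p)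
          + 4 * pd 3 HH p * k01 p) ∧
      (2 * pd 1 k01 p + pd 0 k11 p = 0) ∧
      (pd 0 k12 p + pd 1 k02 p + pd 2 k01 p = 2 * pd 2 HH p * k11 p) ∧
      (pd 0 k13 p + pd 1 k03 p + pd 3 k01 p = 2 * pd 3 HH p * k11 p) ∧
      (2 * pd 2 k02 p + pd 0 k22 p = 4 * pd 2 HH p * k12 p) ∧
      (pd 0 k23 p + pd 2 k03 p + pd 3 k02 p = 2 * (pd 2 HH p * k13 p + pd 3 HH p * k12 p)) ∧
      (2 * pd 3 k03 p + pd 0 k33 p = 4 * pd 3 HH p * k13 p) ∧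
      pd 1 k11 p = 0 ∧ 2 * pd 1 k12 p + pd 2 k11 p = 0 ∧ 2 * pd 1 k13 p + pd 3 k11 p = 0 ∧
      2 * pd 2 k12 p + pd 1 k22 p = 0 ∧ pd 1 k23 p + pd 2 k13 p + pd 3 k12 p = 0 ∧
      2 * pd 3 k13 p + pd 1 k33 p = 0 ∧ pd 2 k22 p = 0 ∧ 2 * pd 2 k23 p + pd 3 k22 p = 0 ∧
      2 * pd 3 k23 p + pd 2 k33 p = 0 ∧ pd 3 k33 p = 0) :
    IsKillingTensor HH UU K := by
  have hfs : ∀ a b, (fun p => K p a b) = (fun p => K p b a) := fun a b => funext fun p => hsym p a b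
  refine ⟨?_, hsym, ?_⟩
  · obtain ⟨h00, h01, h02, h03, h11, h12, h13, h22, h23, h33⟩ := hS
    have g00 := h00.congr (fun p hp => (hK p hp).1)
    have g01 := h01.congr (fun p hp => (hK p hp).2.1)
    have g02 := h02.congr (fun p hp => (hK p hp).2.2.1)
    have g03 := h03.congr (fun p hp => (hK p hp).2.2.2.1)
    have g11 := h11.congr (fun p hp => (hK p hp).2.2.2.2.1)
    have g12 := h12.congr (fun p hp => (hK p hp).2.2.2.2.2.1)
    have g13 := h13.congr (fun p hp => (hK p hp).2.2.2.2.2.2.1)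
    have g22 := h22.congr (fun p hp => (hK p hp).2.2.2.2.2.2.2.1)
    have g23 := h23.congr (fun p hp => (hK p hp).2.2.2.2.2.2.2.2.1)
    have g33 := h33.congr (fun p hp => (hK p hp).2.2.2.2.2.2.2.2.2)
    intro a b
    fin_cases a <;> fin_cases b <;> first | assumption | (rw [hfs]; assumption)
  · intro p hp
    refine ordered ?_ ?_ ?_
    · intro a b c h
      rw [← h]; unfold covD2
      rw [hfs b a, hfs a c, hfs c b]
      simp only [hsym p _ a, hsym p _ b, hsym p _ c, Gamma_symm HH p _ _ a, Gamma_symm HH p _ c b]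
      ring
    · intro a b c h
      rw [← h]; unfold covD2
      rw [hfs c b, hfs b a, hfs a c]
      simp only [hsym p _ a, hsym p _ b, hsym p _ c, Gamma_symm HH p _ _ a, Gamma_symm HH p _ c b]
      ring
    · have e00 := fun i => pd_congr (fun p hp => (hK p hp).1) i p hp
      have e01 := fun i => pd_congr (fun p hp => (hK p hp).2.1) i p hp
      have e02 := fun i => pd_congr (fun p hp => (hK p hp).2.2.1) i p hp
      have e03 := fun i => pd_congr (fun p hp => (hK p hp).2.2.2.1) i p hp
      have e11 := fun i => pd_congr (fun p hp => (hK p hp).2.2.2.2.1) i p hp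
      have e12 := fun i => pd_congr (fun p hp => (hK p hp).2.2.2.2.2.1) i p hp
      have e13 := fun i => pd_congr (fun p hp => (hK p hp).2.2.2.2.2.2.1) i p hp
      have e22 := fun i => pd_congr (fun p hp => (hK p hp).2.2.2.2.2.2.2.1) i p hp
      have e23 := fun i => pd_congr (fun p hp => (hK p hp).2.2.2.2.2.2.2.2.1) i p hp
      have e33 := fun i => pd_congr (fun p hp => (hK p hp).2.2.2.2.2.2.2.2.2) i p hp
      obtain ⟨q00, q01, q02, q03, q11, q12, q13, q22, q23, q33⟩ := hK p hp
      obtain ⟨t1, t2, t3, t4, t5, t6, t7, t8, t9, t10, t11, t12, t13, t14, t15, t16, t17, t18,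
        t19, t20⟩ := hE p hp
      have r10 := hfs 1 0
      have r20 := hfs 2 0
      have r30 := hfs 3 0
      have r21 := hfs 2 1
      have r31 := hfs 3 1
      have r32 := hfs 3 2
      have s10 := hsym p 1 0
      have s20 := hsym p 2 0
      have s30 := hsym p 3 0
      have s21 := hsym p 2 1
      have s31 := hsym p 3 1
      have s32 := hsym p 3 2
      intro a b c hab hbc
      fin_cases a <;> fin_cases b <;> first
        | exact absurd hab (by decide)
        | (fin_cases c <;> first
            | exact absurd hbc (by decide)
            | (simp [covD2, Gamma, Fin.sum_univ_four, f01, f02, f03, f10, f12, f13, f20, f21, f23, f30,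
                f31, f32, r10, r20, r30, r21, r31, r32, s10, s20, s30, s21, s31, s32,
                e00, e01, e02, e03, e11, e12, e13, e22, e23, e33,
                q00, q01, q02, q03, q11, q12, q13, q22, q23, q33]
               linarith))

end KTP

namespace KTP

set_option linter.unusedSimpArgs false

lemma Sm.cd {s : Pt → ℝ} (h : Sm s) : ContDiffOn ℝ (⊤ : ℕ∞) s UU := h

lemma f_coord (i : Fin 4) : ContDiffOn ℝ (⊤ : ℕ∞) (fun p : Pt => p i) UU :=
  (contDiff_apply ℝ ℝ i).contDiffOn

lemma kt1 {K : Pt → Fin 4 → Fin 4 → ℝ} (hsym : ∀ p a b, K p a b = K p b a)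
    (s : Pt → ℝ) (hs : Sm s) (hd : ∀ p ∈ UU, ∀ i, pd i s p = if i = 0 then (1 / 2) * s p * w p else 0)
    (hK : ∀ p ∈ UU,
      K p 0 0 = -(1 / 4) * s p * w p ^ 2 * p 2 * p 3 * p 1 - (3 / 16) * s p * w p ^ 3 * p 2 * p 3 * ((p 2) ^ 2 + (p 3) ^ 2) ∧
      K p 0 1 = - s p * w p * p 2 * p 3 ∧
      K p 0 2 = (1 / 2) * s p * w p * p 3 * p 1 + (1 / 16) * s p * w p ^ 2 * p 3 * (3 * p 2 ^ 2 + p 3 ^ 2) ∧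
      K p 0 3 = (1 / 2) * s p * w p * p 2 * p 1 + (1 / 16) * s p * w p ^ 2 * p 2 * (p 2 ^ 2 + 3 * p 3 ^ 2) ∧
      K p 1 1 = 0 ∧
      K p 1 2 = s p * p 3 ∧
      K p 1 3 = s p * p 2 ∧
      K p 2 2 = 0 ∧
      K p 2 3 = -2 * s p * p 1 ∧
      K p 3 3 = 0) :
    IsKillingTensor HH UU K := by
  refine killing_of hsym _ _ _ _ _ _ _ _ _ _ hK ?_ ?_
  · have hw := Sm_w.cd
    have hs1 := hs.cd
    have c0 := f_coord 0
    have c1 := f_coord 1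
    have c2 := f_coord 2
    have c3 := f_coord 3
    refine ⟨?_, ?_, ?_, ?_, ?_, ?_, ?_, ?_, ?_, ?_⟩ <;> (unfold Sm; fun_prop)
  · intro p hp
    have hw := Sm_w.diff hp
    have hs1 := hs.diff hp
    have hd1 := hd p hp
    obtain ⟨e0, e2, e3⟩ := pd_HH hp
    rw [e0, e2, e3]
    refine ⟨?_, ?_, ?_, ?_, ?_, ?_, ?_, ?_, ?_, ?_, ?_, ?_, ?_, ?_, ?_, ?_, ?_, ?_, ?_, ?_⟩ <;>
    · simp (disch := fun_prop) only [pd_add, pd_sub, pd_neg, pd_mul, pd_pow, pd_const, pd_coord, pd_w hp, hd1,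
        f01, f02, f03, f10, f12, f13, f20, f21, f23, f30, f31, f32, if_true, if_false,
        Nat.cast_ofNat, Nat.reduceSub]
      try ring

lemma kt2 {K : Pt → Fin 4 → Fin 4 → ℝ} (hsym : ∀ p a b, K p a b = K p b a)
    (s : Pt → ℝ) (hs : Sm s) (hd : ∀ p ∈ UU, ∀ i, pd i s p = if i = 0 then (1 / 2) * s p * w p else 0)
    (hK : ∀ p ∈ UU,
      K p 0 0 = -(1 / 8) * s p * w p ^ 2 * p 1 * p 2 ^ 2 - (3 / 32) * s p * w p ^ 3 * p 2 ^ 2 * ((p 2) ^ 2 + (p 3) ^ 2) ∧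
      K p 0 1 = -(1 / 2) * s p * w p * p 2 ^ 2 ∧
      K p 0 2 = (1 / 2) * s p * w p * p 1 * p 2 + (1 / 8) * s p * w p ^ 2 * p 2 ^ 3 + (1 / 16) * s p * w p ^ 2 * p 2 * p 3 ^ 2 ∧
      K p 0 3 = (1 / 16) * s p * w p ^ 2 * p 2 ^ 2 * p 3 ∧
      K p 1 1 = 0 ∧
      K p 1 2 = s p * p 2 ∧
      K p 1 3 = 0 ∧
      K p 2 2 = -2 * s p * p 1 + (1 / 4) * s p * w p * p 3 ^ 2 ∧
      K p 2 3 = -(1 / 4) * s p * w p * p 2 * p 3 ∧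
      K p 3 3 = (1 / 4) * s p * w p * p 2 ^ 2) :
    IsKillingTensor HH UU K := by
  refine killing_of hsym _ _ _ _ _ _ _ _ _ _ hK ?_ ?_
  · have hw := Sm_w.cd
    have hs1 := hs.cd
    have c0 := f_coord 0
    have c1 := f_coord 1
    have c2 := f_coord 2
    have c3 := f_coord 3
    refine ⟨?_, ?_, ?_, ?_, ?_, ?_, ?_, ?_, ?_, ?_⟩ <;> (unfold Sm; fun_prop)
  · intro p hp
    have hw := Sm_w.diff hp
    have hs1 := hs.diff hp
    have hd1 := hd p hp
    obtain ⟨e0, e2, e3⟩ := pd_HH hp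
    rw [e0, e2, e3]
    refine ⟨?_, ?_, ?_, ?_, ?_, ?_, ?_, ?_, ?_, ?_, ?_, ?_, ?_, ?_, ?_, ?_, ?_, ?_, ?_, ?_⟩ <;>
    · simp (disch := fun_prop) only [pd_add, pd_sub, pd_neg, pd_mul, pd_pow, pd_const, pd_coord, pd_w hp, hd1,
        f01, f02, f03, f10, f12, f13, f20, f21, f23, f30, f31, f32, if_true, if_false,
        Nat.cast_ofNat, Nat.reduceSub]
      try ring

lemma kt3 {K : Pt → Fin 4 → Fin 4 → ℝ} (hsym : ∀ p a b, K p a b = K p b a)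
    (s : Pt → ℝ) (hs : Sm s) (hd : ∀ p ∈ UU, ∀ i, pd i s p = if i = 0 then (1 / 2) * s p * w p else 0)
    (hK : ∀ p ∈ UU,
      K p 0 0 = -(1 / 8) * s p * w p ^ 2 * p 1 * p 3 ^ 2 - (3 / 32) * s p * w p ^ 3 * p 3 ^ 2 * ((p 3) ^ 2 + (p 2) ^ 2) ∧
      K p 0 1 = -(1 / 2) * s p * w p * p 3 ^ 2 ∧
      K p 0 2 = (1 / 16) * s p * w p ^ 2 * p 3 ^ 2 * p 2 ∧
      K p 0 3 = (1 / 2) * s p * w p * p 1 * p 3 + (1 / 8) * s p * w p ^ 2 * p 3 ^ 3 + (1 / 16) * s p * w p ^ 2 * p 3 * p 2 ^ 2 ∧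
      K p 1 1 = 0 ∧
      K p 1 2 = 0 ∧
      K p 1 3 = s p * p 3 ∧
      K p 2 2 = (1 / 4) * s p * w p * p 3 ^ 2 ∧
      K p 2 3 = -(1 / 4) * s p * w p * p 3 * p 2 ∧
      K p 3 3 = -2 * s p * p 1 + (1 / 4) * s p * w p * p 2 ^ 2) :
    IsKillingTensor HH UU K := by
  refine killing_of hsym _ _ _ _ _ _ _ _ _ _ hK ?_ ?_
  · have hw := Sm_w.cd
    have hs1 := hs.cd
    have c0 := f_coord 0
    have c1 := f_coord 1
    have c2 := f_coord 2
    have c3 := f_coord 3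
    refine ⟨?_, ?_, ?_, ?_, ?_, ?_, ?_, ?_, ?_, ?_⟩ <;> (unfold Sm; fun_prop)
  · intro p hp
    have hw := Sm_w.diff hp
    have hs1 := hs.diff hp
    have hd1 := hd p hp
    obtain ⟨e0, e2, e3⟩ := pd_HH hp
    rw [e0, e2, e3]
    refine ⟨?_, ?_, ?_, ?_, ?_, ?_, ?_, ?_, ?_, ?_, ?_, ?_, ?_, ?_, ?_, ?_, ?_, ?_, ?_, ?_⟩ <;>
    · simp (disch := fun_prop) only [pd_add, pd_sub, pd_neg, pd_mul, pd_pow, pd_const, pd_coord, pd_w hp, hd1,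
        f01, f02, f03, f10, f12, f13, f20, f21, f23, f30, f31, f32, if_true, if_false,
        Nat.cast_ofNat, Nat.reduceSub]
      try ring

lemma kt4 {K : Pt → Fin 4 → Fin 4 → ℝ} (hsym : ∀ p a b, K p a b = K p b a)
    (hK : ∀ p ∈ UU,
      K p 0 0 = -(3 / 16) * w p ^ 2 * p 1 * ((p 2) ^ 2 + (p 3) ^ 2) + (7 / 128) * w p ^ 3 * ((p 2) ^ 2 + (p 3) ^ 2) ^ 2 ∧
      K p 0 1 = - p 1 + (3 / 8) * w p * ((p 2) ^ 2 + (p 3) ^ 2) ∧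
      K p 0 2 = -(1 / 16) * w p ^ 2 * p 2 * ((p 2) ^ 2 + (p 3) ^ 2) ∧
      K p 0 3 = -(1 / 16) * w p ^ 2 * p 3 * ((p 2) ^ 2 + (p 3) ^ 2) ∧
      K p 1 1 = 2 * p 0 ∧
      K p 1 2 = -(1 / 2) * p 2 ∧
      K p 1 3 = -(1 / 2) * p 3 ∧
      K p 2 2 = p 1 - (1 / 8) * w p * p 3 ^ 2 ∧
      K p 2 3 = (1 / 8) * w p * p 2 * p 3 ∧
      K p 3 3 = p 1 - (1 / 8) * w p * p 2 ^ 2) :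
    IsKillingTensor HH UU K := by
  refine killing_of hsym _ _ _ _ _ _ _ _ _ _ hK ?_ ?_
  · have hw := Sm_w.cd
    have c0 := f_coord 0
    have c1 := f_coord 1
    have c2 := f_coord 2
    have c3 := f_coord 3
    refine ⟨?_, ?_, ?_, ?_, ?_, ?_, ?_, ?_, ?_, ?_⟩ <;> (unfold Sm; fun_prop)
  · intro p hp
    have hw := Sm_w.diff hp
    have hw1 : p 0 * w p = 1 := mul_inv_cancel₀ (ne_of_gt hp)
    obtain ⟨e0, e2, e3⟩ := pd_HH hp
    rw [e0, e2, e3]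
    refine ⟨?_, ?_, ?_, ?_, ?_, ?_, ?_, ?_, ?_, ?_, ?_, ?_, ?_, ?_, ?_, ?_, ?_, ?_, ?_, ?_⟩ <;>
    · simp (disch := fun_prop) only [pd_add, pd_sub, pd_neg, pd_mul, pd_pow, pd_const, pd_coord, pd_w hp,
        f01, f02, f03, f10, f12, f13, f20, f21, f23, f30, f31, f32, if_true, if_false,
        Nat.cast_ofNat, Nat.reduceSub]
      first | ring1 | grind

lemma kt8 {K : Pt → Fin 4 → Fin 4 → ℝ} (hsym : ∀ p a b, K p a b = K p b a)
    (s : Pt → ℝ) (hs : Sm s) (hd : ∀ p ∈ UU, ∀ i, pd i s p = if i = 0 then (3 / 4) * s p * w p else 0)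
    (hK : ∀ p ∈ UU,
      K p 0 0 = -(5 / 32) * s p * w p ^ 3 * p 2 * ((p 2) ^ 2 + (p 3) ^ 2) ∧
      K p 0 1 = -(3 / 4) * s p * w p * p 2 ∧
      K p 0 2 = (1 / 16) * s p * w p ^ 2 * (3 * p 2 ^ 2 + 2 * p 3 ^ 2) ∧
      K p 0 3 = (1 / 16) * s p * w p ^ 2 * p 2 * p 3 ∧
      K p 1 1 = 0 ∧
      K p 1 2 = s p ∧
      K p 1 3 = 0 ∧
      K p 2 2 = 0 ∧
      K p 2 3 = -(1 / 4) * s p * w p * p 3 ∧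
      K p 3 3 = (1 / 2) * s p * w p * p 2) :
    IsKillingTensor HH UU K := by
  refine killing_of hsym _ _ _ _ _ _ _ _ _ _ hK ?_ ?_
  · have hw := Sm_w.cd
    have hs1 := hs.cd
    have c0 := f_coord 0
    have c1 := f_coord 1
    have c2 := f_coord 2
    have c3 := f_coord 3
    refine ⟨?_, ?_, ?_, ?_, ?_, ?_, ?_, ?_, ?_, ?_⟩ <;> (unfold Sm; fun_prop)
  · intro p hp
    have hw := Sm_w.diff hp
    have hs1 := hs.diff hp
    have hd1 := hd p hp
    obtain ⟨e0, e2, e3⟩ := pd_HH hp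
    rw [e0, e2, e3]
    refine ⟨?_, ?_, ?_, ?_, ?_, ?_, ?_, ?_, ?_, ?_, ?_, ?_, ?_, ?_, ?_, ?_, ?_, ?_, ?_, ?_⟩ <;>
    · simp (disch := fun_prop) only [pd_add, pd_sub, pd_neg, pd_mul, pd_pow, pd_const, pd_coord, pd_w hp, hd1,
        f01, f02, f03, f10, f12, f13, f20, f21, f23, f30, f31, f32, if_true, if_false,
        Nat.cast_ofNat, Nat.reduceSub]
      try ring

lemma kt10 {K : Pt → Fin 4 → Fin 4 → ℝ} (hsym : ∀ p a b, K p a b = K p b a)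
    (s : Pt → ℝ) (hs : Sm s) (hd : ∀ p ∈ UU, ∀ i, pd i s p = if i = 0 then (3 / 4) * s p * w p else 0)
    (hK : ∀ p ∈ UU,
      K p 0 0 = -(5 / 32) * s p * w p ^ 3 * p 3 * ((p 3) ^ 2 + (p 2) ^ 2) ∧
      K p 0 1 = -(3 / 4) * s p * w p * p 3 ∧
      K p 0 2 = (1 / 16) * s p * w p ^ 2 * p 3 * p 2 ∧
      K p 0 3 = (1 / 16) * s p * w p ^ 2 * (3 * p 3 ^ 2 + 2 * p 2 ^ 2) ∧
      K p 1 1 = 0 ∧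
      K p 1 2 = 0 ∧
      K p 1 3 = s p ∧
      K p 2 2 = (1 / 2) * s p * w p * p 3 ∧
      K p 2 3 = -(1 / 4) * s p * w p * p 2 ∧
      K p 3 3 = 0) :
    IsKillingTensor HH UU K := by
  refine killing_of hsym _ _ _ _ _ _ _ _ _ _ hK ?_ ?_
  · have hw := Sm_w.cd
    have hs1 := hs.cd
    have c0 := f_coord 0
    have c1 := f_coord 1
    have c2 := f_coord 2
    have c3 := f_coord 3
    refine ⟨?_, ?_, ?_, ?_, ?_, ?_, ?_, ?_, ?_, ?_⟩ <;> (unfold Sm; fun_prop)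
  · intro p hp
    have hw := Sm_w.diff hp
    have hs1 := hs.diff hp
    have hd1 := hd p hp
    obtain ⟨e0, e2, e3⟩ := pd_HH hp
    rw [e0, e2, e3]
    refine ⟨?_, ?_, ?_, ?_, ?_, ?_, ?_, ?_, ?_, ?_, ?_, ?_, ?_, ?_, ?_, ?_, ?_, ?_, ?_, ?_⟩ <;>
    · simp (disch := fun_prop) only [pd_add, pd_sub, pd_neg, pd_mul, pd_pow, pd_const, pd_coord, pd_w hp, hd1,
        f01, f02, f03, f10, f12, f13, f20, f21, f23, f30, f31, f32, if_true, if_false,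
        Nat.cast_ofNat, Nat.reduceSub]
      try ring

end KTP

namespace KTP

set_option linter.unusedSimpArgs false
set_option linter.unusedVariables false

/-- Killing vector equations in components; `j`, `k` are the two transverse directions. -/
structure KV (j k : Fin 4) (X0 X1 Y Z : Pt → ℝ) : Prop where
  s0 : Sm X0
  s1 : Sm X1
  sY : Sm Y
  sZ : Sm Z
  e00 : ∀ p ∈ UU, pd 0 X0 p = - 3 / 16 * w p ^ 3 * ((p j) ^ 2 + (p k) ^ 2) * X1 p
    + 3 / 16 * w p ^ 2 * p j * Y p + 3 / 16 * w p ^ 2 * p k * Z p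
  e01 : ∀ p ∈ UU, pd 0 X1 p = - pd 1 X0 p
  e0j : ∀ p ∈ UU, pd 0 Y p = - pd j X0 p + 3 / 8 * w p ^ 2 * p j * X1 p
  e0k : ∀ p ∈ UU, pd 0 Z p = - pd k X0 p + 3 / 8 * w p ^ 2 * p k * X1 p
  e11 : ∀ p ∈ UU, pd 1 X1 p = 0
  e1j : ∀ p ∈ UU, pd 1 Y p = - pd j X1 p
  e1k : ∀ p ∈ UU, pd 1 Z p = - pd k X1 p
  ejj : ∀ p ∈ UU, pd j Y p = 0
  ekk : ∀ p ∈ UU, pd k Z p = 0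
  ejk : ∀ p ∈ UU, pd k Y p = - pd j Z p

lemma KV.symm {j k : Fin 4} {X0 X1 Y Z : Pt → ℝ} (h : KV j k X0 X1 Y Z) : KV k j X0 X1 Z Y where
  s0 := h.s0
  s1 := h.s1
  sY := h.sZ
  sZ := h.sY
  e00 := fun p hp => by rw [h.e00 p hp]; ring
  e01 := h.e01
  e0j := h.e0k
  e0k := h.e0j
  e11 := h.e11
  e1j := h.e1k
  e1k := h.e1j
  ejj := h.ekk
  ekk := h.ejj
  ejk := fun p hp => by rw [h.ejk p hp]; ring

lemma KV.of {X : Pt → Fin 4 → ℝ} (h : IsKillingVector HH UU X) :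
    KV 2 3 (fun p => X p 0) (fun p => X p 1) (fun p => X p 2) (fun p => X p 3) := by
  obtain ⟨hs, he⟩ := h
  refine ⟨hs 0, hs 1, hs 2, hs 3, ?_, ?_, ?_, ?_, ?_, ?_, ?_, ?_, ?_, ?_⟩ <;> intro p hp <;>
    obtain ⟨e0, e2, e3⟩ := pd_HH hp
  · have := he p hp 0 0
    simp [covD1, Gamma, Fin.sum_univ_four, f01, f02, f03, f10, f12, f13, f20, f21, f23, f30,
                f31, f32, e0, e2, e3] at this
    linarith
  · have := he p hp 0 1
    simp [covD1, Gamma, Fin.sum_univ_four, f01, f02, f03, f10, f12, f13, f20, f21, f23, f30,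
                f31, f32, e0, e2, e3] at this
    linarith
  · have := he p hp 0 2
    simp [covD1, Gamma, Fin.sum_univ_four, f01, f02, f03, f10, f12, f13, f20, f21, f23, f30,
                f31, f32, e0, e2, e3] at this
    linarith
  · have := he p hp 0 3
    simp [covD1, Gamma, Fin.sum_univ_four, f01, f02, f03, f10, f12, f13, f20, f21, f23, f30,
                f31, f32, e0, e2, e3] at this
    linarith
  · have := he p hp 1 1
    simp [covD1, Gamma, Fin.sum_univ_four, f01, f02, f03, f10, f12, f13, f20, f21, f23, f30,
                f31, f32, e0, e2, e3] at this
    linarith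
  · have := he p hp 1 2
    simp [covD1, Gamma, Fin.sum_univ_four, f01, f02, f03, f10, f12, f13, f20, f21, f23, f30,
                f31, f32, e0, e2, e3] at this
    linarith
  · have := he p hp 1 3
    simp [covD1, Gamma, Fin.sum_univ_four, f01, f02, f03, f10, f12, f13, f20, f21, f23, f30,
                f31, f32, e0, e2, e3] at this
    linarith
  · have := he p hp 2 2
    simp [covD1, Gamma, Fin.sum_univ_four, f01, f02, f03, f10, f12, f13, f20, f21, f23, f30,
                f31, f32, e0, e2, e3] at this
    linarith
  · have := he p hp 3 3
    simp [covD1, Gamma, Fin.sum_univ_four, f01, f02, f03, f10, f12, f13, f20, f21, f23, f30,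
                f31, f32, e0, e2, e3] at this
    linarith
  · have := he p hp 2 3
    simp [covD1, Gamma, Fin.sum_univ_four, f01, f02, f03, f10, f12, f13, f20, f21, f23, f30,
                f31, f32, e0, e2, e3] at this
    linarith

lemma w_pos {p : Pt} (hp : p ∈ UU) : 0 < w p := inv_pos.2 hp

lemma pd_neg' {f : Pt → ℝ} {p : Pt} (i : Fin 4) : pd i (fun q => - f q) p = - pd i f p :=
  pd_neg i

lemma KV.jk {j k : Fin 4} {X0 X1 Y Z : Pt → ℝ} (h : KV j k X0 X1 Y Z) :
    ∀ p ∈ UU, pd k (pd j X1) p = 0 := by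
  intro p hp
  have h1 := pd_congr h.e1j k p hp
  have h2 := pd_congr h.e1k j p hp
  have h3 := pd_congr h.ejk 1 p hp
  rw [pd_neg] at h1 h2 h3
  rw [pd_comm k 1 h.sY hp] at h1
  rw [pd_comm j 1 h.sZ hp, pd_comm j k h.s1 hp] at h2
  linarith

/-- The `v`-component of a Killing vector does not depend on the transverse directions. -/
lemma KV.Fzero {j k : Fin 4} {X0 X1 Y Z : Pt → ℝ} (h : KV j k X0 X1 Y Z)
    (hj0 : (j = 0) = False) (hj1 : (j = 1) = False) (hk0 : (k = 0) = False) (hk1 : (k = 1) = False)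
    (hjk : (j = k) = False) (hkj : (k = j) = False) :
    ∀ p ∈ UU, pd j X1 p = 0 := by
  -- `pd 0 (pd j X1) = 0`
  have hF0 : ∀ p ∈ UU, pd 0 (pd j X1) p = 0 := by
    intro p hp
    have hw := Sm_w.diff hp
    have d1 := h.s1.diff hp
    have dx := (h.s0.pd j).diff hp
    have a := pd_congr h.e0j 1 p hp
    simp (disch := fun_prop) only [pd_add, pd_neg, pd_mul, pd_pow, pd_const, pd_coord, pd_w hp,
      h.e11 p hp, hj1, f10, if_false] at a
    have b := pd_congr h.e1j 0 p hp
    rw [pd_neg] at b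
    have c := pd_congr h.e01 j p hp
    rw [pd_neg] at c
    rw [pd_comm 1 0 h.sY hp, pd_comm 1 j h.s0 hp] at a
    rw [pd_comm j 0 h.s1 hp] at c
    linarith
  have hFj : ∀ p ∈ UU, pd j (pd j X1) p = 0 := by
    intro p hp
    have a := pd_congr h.e1j j p hp
    rw [pd_neg, pd_comm j 1 h.sY hp, pd_congr h.ejj 1 p hp, pd_const] at a
    linarith
  -- `v`-derivative of the `uu` equation
  have hA : ∀ p ∈ UU, pd 0 (pd 0 X1) p =
      3 / 16 * w p ^ 2 * p j * pd j X1 p + 3 / 16 * w p ^ 2 * p k * pd k X1 p := by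
    intro p hp
    have hw := Sm_w.diff hp
    have d1 := h.s1.diff hp
    have dY := h.sY.diff hp
    have dZ := h.sZ.diff hp
    have a := pd_congr h.e00 1 p hp
    simp (disch := fun_prop) only [pd_add, pd_neg, pd_mul, pd_pow, pd_const, pd_coord, pd_w hp,
      h.e11 p hp, hj1, hk1, f10, if_false, h.e1j p hp, h.e1k p hp] at a
    have c := pd_congr h.e01 0 p hp
    rw [pd_neg] at c
    rw [pd_comm 1 0 h.s0 hp] at a
    linarith
  intro p hp
  have hw := Sm_w.diff hp
  have d1 := (h.s1.pd j).diff hp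
  have d2 := (h.s1.pd k).diff hp
  have a := pd_congr hA j p hp
  simp (disch := fun_prop) only [pd_add, pd_neg, pd_mul, pd_pow, pd_const, pd_coord, pd_w hp,
      hjk, hkj, hj0, if_false, if_true, hFj p hp, h.symm.jk p hp] at a
  rw [pd_comm j 0 (h.s1.pd 0) hp] at a
  have b : pd 0 (pd j (pd 0 X1)) p = 0 := by
    have : ∀ q ∈ UU, pd j (pd 0 X1) q = (fun _ => (0 : ℝ)) q := fun q hq => by
      rw [pd_comm j 0 h.s1 hq, hF0 q hq]
    rw [pd_congr this 0 p hp, pd_const]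
  rw [b] at a
  have hw0 := w_pos hp
  have : (3 / 16 * w p ^ 2) * pd j X1 p = 0 := by linarith
  rcases mul_eq_zero.1 this with h1 | h1
  · exact absurd h1 (by positivity)
  · exact h1

/-- The rotation parameter does not depend on `u`. -/
lemma KV.rot {j k : Fin 4} {X0 X1 Y Z : Pt → ℝ} (h : KV j k X0 X1 Y Z)
    (hj0 : (j = 0) = False) (hj1 : (j = 1) = False) (hk0 : (k = 0) = False) (hk1 : (k = 1) = False)
    (hjk : (j = k) = False) (hkj : (k = j) = False) :
    ∀ p ∈ UU, pd 0 (pd j Z) p = 0 := by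
  intro p hp
  have hw := Sm_w.diff hp
  have d1 := h.s1.diff hp
  have dj := (h.s0.pd j).diff hp
  have dk := (h.s0.pd k).diff hp
  have F := h.Fzero hj0 hj1 hk0 hk1 hjk hkj p hp
  have G := h.symm.Fzero hk0 hk1 hj0 hj1 hkj hjk p hp
  have a := pd_congr h.e0j k p hp
  simp (disch := fun_prop) only [pd_add, pd_neg, pd_mul, pd_pow, pd_const, pd_coord, pd_w hp,
      hjk, hkj, hk0, if_false, if_true, G] at a
  have b := pd_congr h.e0k j p hp
  simp (disch := fun_prop) only [pd_add, pd_neg, pd_mul, pd_pow, pd_const, pd_coord, pd_w hp,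
      hjk, hkj, hj0, if_false, if_true, F] at b
  have c := pd_congr h.ejk 0 p hp
  rw [pd_neg] at c
  rw [pd_comm k 0 h.sY hp, pd_comm k j h.s0 hp] at a
  rw [pd_comm j 0 h.sZ hp] at b
  linarith

lemma KV.ode {j k : Fin 4} {X0 X1 Y Z : Pt → ℝ} (h : KV j k X0 X1 Y Z)
    (hj0 : (j = 0) = False) (hj1 : (j = 1) = False) (hk0 : (k = 0) = False) (hk1 : (k = 1) = False)
    (hjk : (j = k) = False) (hkj : (k = j) = False) {p : Pt} (hp : p ∈ UU) (hpj : p j = 0)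
    (hpk : p k = 0) :
    pd 0 (pd 0 Z) p = - (3 / 16) * w p ^ 2 * Z p := by
  have hw := Sm_w.diff hp
  have d1 := h.s1.diff hp
  have dk := (h.s0.pd k).diff hp
  have dY := h.sY.diff hp
  have dZ := h.sZ.diff hp
  have a := pd_congr h.e0k 0 p hp
  simp (disch := fun_prop) only [pd_add, pd_neg, pd_mul, pd_pow, pd_const, pd_coord, pd_w hp,
      hjk, hkj, hk0, if_false, if_true, hpk] at a
  have b := pd_congr h.e00 k p hp
  simp (disch := fun_prop) only [pd_add, pd_neg, pd_mul, pd_pow, pd_const, pd_coord, pd_w hp,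
      hjk, hkj, hk0, if_false, if_true, hpk, hpj] at b
  rw [pd_comm 0 k h.s0 hp, b] at a
  rw [a]; ring

end KTP

namespace KTP

set_option linter.unusedSimpArgs false
set_option linter.unusedVariables false

lemma KV.v {X : Pt → Fin 4 → ℝ} (h : IsKillingVector HH UU X) (a : Fin 4) (ha : a = 2 ∨ a = 3) :
    ∀ p ∈ UU, pd 1 (fun q => X q a) p = 0 := by
  intro p hp
  have h' := KV.of h
  have F := h'.Fzero f20 f21 f30 f31 f23 f32 p hp
  have G := h'.symm.Fzero f30 f31 f20 f21 f32 f23 p hp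
  rcases ha with rfl | rfl
  · rw [h'.e1j p hp, F, neg_zero]
  · rw [h'.e1k p hp, G, neg_zero]

lemma metric_const {a b : Fin 4} (ha : a = 2 ∨ a = 3) (hb : b = 2 ∨ b = 3) :
    ∀ p, ppMetric HH p a b = if a = b then 1 else 0 := by
  intro p
  rcases ha with rfl | rfl <;> rcases hb with rfl | rfl <;>
    simp [ppMetric, f20, f21, f23, f30, f31, f32]

lemma red_v {K : Pt → Fin 4 → Fin 4 → ℝ} (h : IsReducible HH UU K) {a b : Fin 4}
    (ha : a = 2 ∨ a = 3) (hb : b = 2 ∨ b = 3) : ∀ p ∈ UU, pd 1 (fun q => K q a b) p = 0 := by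
  obtain ⟨c0, n, c, X, Y, hX, hY, hK⟩ := h
  intro p hp
  rw [pd_congr (fun q hq => (hK q hq a b).trans (by rw [metric_const ha hb q])) 1 p hp]
  have dX : ∀ m a, DifferentiableAt ℝ (fun q => X m q a) p :=
    fun m a => Sm.diff ((hX m).1 a) hp
  have dY : ∀ m a, DifferentiableAt ℝ (fun q => Y m q a) p :=
    fun m a => Sm.diff ((hY m).1 a) hp
  have key : ∀ m, DifferentiableAt ℝ
      (fun q => c m * ((X m q a * Y m q b + X m q b * Y m q a) / 2)) p := by
    intro m
    have := dX m a
    have := dX m b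
    have := dY m a
    have := dY m b
    fun_prop
  have key2 : ∀ m, pd 1 (fun q => c m * ((X m q a * Y m q b + X m q b * Y m q a) / 2)) p = 0 := by
    intro m
    have t1 := dX m a
    have t2 := dX m b
    have t3 := dY m a
    have t4 := dY m b
    simp only [div_eq_mul_inv]
    rw [pd_mul 1 (by fun_prop) (by fun_prop), pd_mul 1 (by fun_prop) (by fun_prop),
      pd_add 1 (by fun_prop) (by fun_prop), pd_mul 1 t1 t4, pd_mul 1 t2 t3, pd_const, pd_const,
      KV.v (hX m) a ha p hp, KV.v (hX m) b hb p hp, KV.v (hY m) a ha p hp, KV.v (hY m) b hb p hp]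
    ring
  rw [pd_add 1 (by fun_prop) (DifferentiableAt.fun_sum fun m _ => key m), pd_const, pd_sum 1 key]
  simp [key2]

lemma red_ode {j k : Fin 4} {f : Pt → ℝ} {n : ℕ} (c0 : ℝ) (c : Fin n → ℝ)
    (X0 X1 Y Z X0' X1' Y' Z' : Fin n → Pt → ℝ) (h : ∀ m, KV j k (X0 m) (X1 m) (Y m) (Z m))
    (h' : ∀ m, KV j k (X0' m) (X1' m) (Y' m) (Z' m))
    (hf : ∀ p ∈ UU, f p = c0 + ∑ m, c m * (Z m p * Z' m p))
    (hj0 : (j = 0) = False) (hj1 : (j = 1) = False) (hk0 : (k = 0) = False) (hk1 : (k = 1) = False)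
    (hjk : (j = k) = False) (hkj : (k = j) = False) {p : Pt} (hp : p ∈ UU) (hpj : p j = 0)
    (hpk : p k = 0) : pd 0 (pd 0 (pd j f)) p = - (3 / 16) * w p ^ 2 * pd j f p := by
  have hfj : ∀ p ∈ UU, pd j f p =
      ∑ m, c m * (Z m p * pd j (Z' m) p + pd j (Z m) p * Z' m p) := by
    intro p hp
    have d := fun m => (h m).sZ.diff hp
    have d' := fun m => (h' m).sZ.diff hp
    have e := fun m => (DifferentiableAt.fun_mul (d m) (d' m)).const_mul (c m)
    rw [pd_congr hf j p hp, pd_add j (by fun_prop) (DifferentiableAt.fun_sum fun m _ => e m),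
      pd_const, pd_sum j e, zero_add]
    refine Finset.sum_congr rfl fun m _ => ?_
    rw [pd_mul j (by fun_prop) ((d m).fun_mul (d' m)), pd_mul j (d m) (d' m), pd_const]
    ring
  have hfj0 : ∀ p ∈ UU, pd 0 (pd j f) p =
      ∑ m, c m * (pd 0 (Z m) p * pd j (Z' m) p + pd j (Z m) p * pd 0 (Z' m) p) := by
    intro p hp
    have d := fun m => (h m).sZ.diff hp
    have d' := fun m => (h' m).sZ.diff hp
    have dj := fun m => ((h m).sZ.pd j).diff hp
    have dj' := fun m => ((h' m).sZ.pd j).diff hp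
    have e := fun m => (DifferentiableAt.fun_add (DifferentiableAt.fun_mul (d m) (dj' m))
      (DifferentiableAt.fun_mul (dj m) (d' m))).const_mul (c m)
    rw [pd_congr hfj 0 p hp, pd_sum 0 e]
    refine Finset.sum_congr rfl fun m _ => ?_
    rw [pd_mul 0 (by fun_prop) (((d m).fun_mul (dj' m)).fun_add ((dj m).fun_mul (d' m))),
      pd_add 0 ((d m).fun_mul (dj' m)) ((dj m).fun_mul (d' m)),
      pd_mul 0 (d m) (dj' m), pd_mul 0 (dj m) (d' m), pd_const,
      (h m).rot hj0 hj1 hk0 hk1 hjk hkj p hp, (h' m).rot hj0 hj1 hk0 hk1 hjk hkj p hp]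
    ring
  have d := fun m => ((h m).sZ.pd 0).diff hp
  have d' := fun m => ((h' m).sZ.pd 0).diff hp
  have dj := fun m => ((h m).sZ.pd j).diff hp
  have dj' := fun m => ((h' m).sZ.pd j).diff hp
  have e := fun m => (DifferentiableAt.fun_add (DifferentiableAt.fun_mul (d m) (dj' m))
    (DifferentiableAt.fun_mul (dj m) (d' m))).const_mul (c m)
  rw [pd_congr hfj0 0 p hp, pd_sum 0 e, hfj p hp, Finset.mul_sum]
  refine Finset.sum_congr rfl fun m _ => ?_
  rw [pd_mul 0 (by fun_prop) (((d m).fun_mul (dj' m)).fun_add ((dj m).fun_mul (d' m))),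
    pd_add 0 ((d m).fun_mul (dj' m)) ((dj m).fun_mul (d' m)),
    pd_mul 0 (d m) (dj' m), pd_mul 0 (dj m) (d' m), pd_const,
    (h m).rot hj0 hj1 hk0 hk1 hjk hkj p hp, (h' m).rot hj0 hj1 hk0 hk1 hjk hkj p hp,
    (h m).ode hj0 hj1 hk0 hk1 hjk hkj hp hpj hpk, (h' m).ode hj0 hj1 hk0 hk1 hjk hkj hp hpj hpk]
  ring

/-- base point -/
def pt0 : Pt := Pi.single 0 1

lemma pt0_mem : pt0 ∈ UU := by simp [pt0, UU]

lemma no_ode {s : Pt → ℝ} (hs : Sm s)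
    (hd : ∀ p ∈ UU, ∀ i, pd i s p = if i = 0 then (3 / 4) * s p * w p else 0) {j : Fin 4}
    (hj0 : (j = 0) = False) {f : Pt → ℝ} (hf : ∀ p ∈ UU, f p = (1 / 2) * s p * w p * p j)
    {p : Pt} (hp : p ∈ UU) (hsp : 0 < s p)
    (ho : pd 0 (pd 0 (pd j f)) p = - (3 / 16) * w p ^ 2 * pd j f p) : False := by
  have h1 : ∀ p ∈ UU, pd j f p = (1 / 2) * s p * w p := by
    intro p hp
    have hw := Sm_w.diff hp
    have hs1 := hs.diff hp
    rw [pd_congr hf j p hp]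
    simp (disch := fun_prop) only [pd_add, pd_neg, pd_mul, pd_pow, pd_const, pd_coord, pd_w hp,
      hd p hp, hj0, if_false, if_true]
    ring
  have h2 : ∀ p ∈ UU, pd 0 (pd j f) p = -(1 / 8) * s p * w p ^ 2 := by
    intro p hp
    have hw := Sm_w.diff hp
    have hs1 := hs.diff hp
    rw [pd_congr h1 0 p hp]
    simp (disch := fun_prop) only [pd_add, pd_neg, pd_mul, pd_pow, pd_const, pd_coord, pd_w hp,
      hd p hp, if_false, if_true]
    ring
  have hw := Sm_w.diff hp
  have hs1 := hs.diff hp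
  rw [pd_congr h2 0 p hp, h1 p hp] at ho
  simp (disch := fun_prop) only [pd_add, pd_neg, pd_mul, pd_pow, pd_const, pd_coord, pd_w hp,
      hd p hp, if_false, if_true, Nat.cast_ofNat, Nat.reduceSub] at ho
  have := w_pos hp
  have : 0 < s p * w p ^ 3 := by positivity
  nlinarith

lemma red_ode3 {K : Pt → Fin 4 → Fin 4 → ℝ} (h : IsReducible HH UU K) :
    pd 0 (pd 0 (pd 2 (fun q => K q 3 3))) pt0
      = - (3 / 16) * w pt0 ^ 2 * pd 2 (fun q => K q 3 3) pt0 := by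
  obtain ⟨c0, n, c, X, Y, hX, hY, hK⟩ := h
  refine red_ode c0 c _ _ _ (fun m q => X m q 3) _ _ _ (fun m q => Y m q 3)
    (fun m => KV.of (hX m)) (fun m => KV.of (hY m)) ?_ f20 f21 f30 f31 f23 f32 pt0_mem ?_ ?_
  · intro p hp
    rw [hK p hp 3 3, metric_const (Or.inr rfl) (Or.inr rfl)]
    simp
  · simp [pt0]
  · simp [pt0]

lemma red_ode2 {K : Pt → Fin 4 → Fin 4 → ℝ} (h : IsReducible HH UU K) :
    pd 0 (pd 0 (pd 3 (fun q => K q 2 2))) pt0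
      = - (3 / 16) * w pt0 ^ 2 * pd 3 (fun q => K q 2 2) pt0 := by
  obtain ⟨c0, n, c, X, Y, hX, hY, hK⟩ := h
  refine red_ode c0 c _ _ _ (fun m q => X m q 2) _ _ _ (fun m q => Y m q 2)
    (fun m => (KV.of (hX m)).symm) (fun m => (KV.of (hY m)).symm) ?_ f30 f31 f20 f21 f32 f23
    pt0_mem ?_ ?_
  · intro p hp
    rw [hK p hp 2 2, metric_const (Or.inl rfl) (Or.inl rfl)]
    simp
  · simp [pt0]
  · simp [pt0]

end KTP

namespace KTP

set_option linter.unusedSimpArgs false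
set_option linter.unusedVariables false

lemma sd_symm (i j a b : Fin 4) : sd i j a b = sd i j b a := by
  unfold sd; ring

lemma swp0 : swp 0 = 0 := by decide
lemma swp1 : swp 1 = 1 := by decide
lemma swp2 : swp 2 = 3 := by decide
lemma swp3 : swp 3 = 2 := by decide

/-- the profile function -/
def AA (u : ℝ) : ℝ := 3 / 16 / u ^ 2

/-- the function `Γ` -/
def GG (u : ℝ) : ℝ := u ^ ((3 : ℝ) / 4)

lemma Sm_u {s : ℝ → ℝ} (h : ContDiffOn ℝ (⊤ : ℕ∞) s (Set.Ioi 0)) : Sm (fun p => s (p 0)) :=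
  h.comp (contDiff_apply ℝ ℝ (0 : Fin 4)).contDiffOn (fun p hp => hp)

lemma Sm_rpow (r : ℝ) : Sm (fun p => (p 0) ^ r) := by
  refine Sm_u (s := fun u => u ^ r) ?_
  intro u hu
  exact (Real.contDiffAt_rpow_const_of_ne (ne_of_gt hu)).contDiffWithinAt

lemma rpow_w {u : ℝ} (hu : 0 < u) (r r' : ℝ) (n : ℕ) (h : r' = r - n) :
    u ^ r' = u ^ r * u⁻¹ ^ n := by
  rw [h, Real.rpow_sub_natCast hu.ne', inv_pow, div_eq_mul_inv]

lemma hd_rpow (r : ℝ) : ∀ p ∈ UU, ∀ i, pd i (fun p => (p 0) ^ r) p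
    = if i = 0 then r * (p 0) ^ r * w p else 0 := by
  intro p hp i
  rw [pd_u (s := fun u => u ^ r) (Real.hasDerivAt_rpow_const (Or.inl (ne_of_gt hp))) i,
    rpow_w hp r (r - 1) 1 (by simp)]
  simp [w, mul_assoc]

lemma AA_eq (p : Pt) : AA (p 0) = 3 / 16 * w p ^ 2 := by
  unfold AA w; rw [inv_pow]; ring

lemma AA_deriv {u : ℝ} (hu : 0 < u) : HasDerivAt AA (-(3 / 8) * u⁻¹ ^ 3) u := by
  have h := ((hasDerivAt_pow 2 u).fun_inv (by positivity)).const_mul (3 / 16 : ℝ)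
  refine h.congr_deriv ?_
  field_simp
  norm_num
  ring

lemma AA_deriv' {p : Pt} (hp : p ∈ UU) : deriv AA (p 0) = -(3 / 8) * w p ^ 3 :=
  (AA_deriv hp).deriv

lemma AA_pos {u : ℝ} (hu : 0 < u) : 0 < AA u := by unfold AA; positivity

lemma GG_deriv' {p : Pt} (hp : p ∈ UU) : deriv GG (p 0) = 3 / 4 * GG (p 0) * w p := by
  have := (Real.hasDerivAt_rpow_const (p := (3 : ℝ) / 4) (Or.inl (ne_of_gt hp))).deriv
  have h2 : GG = fun u => u ^ ((3 : ℝ) / 4) := rfl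
  rw [h2, this, rpow_w hp (3 / 4) (3 / 4 - 1) 1 (by simp)]
  simp [w, mul_assoc]

/-- `A^{-1/4}` -/
def s1 (p : Pt) : ℝ := AA (p 0) ^ (-(1 : ℝ) / 4)

lemma s1_pos {p : Pt} (hp : p ∈ UU) : 0 < s1 p := Real.rpow_pos_of_pos (AA_pos hp) _

lemma Sm_s1 : Sm s1 := by
  refine Sm_u (s := fun u => AA u ^ (-(1 : ℝ) / 4)) ?_
  intro u hu
  have h1 : ContDiffAt ℝ (⊤ : ℕ∞) AA u := by
    unfold AA
    have : u ^ 2 ≠ 0 := pow_ne_zero _ (ne_of_gt hu)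
    exact contDiffAt_const.div (contDiffAt_id.pow 2) this
  exact (h1.rpow_const_of_ne (ne_of_gt (AA_pos hu))).contDiffWithinAt

lemma A54 {p : Pt} (hp : p ∈ UU) :
    AA (p 0) ^ (-(5 : ℝ) / 4) * deriv AA (p 0) = -2 * s1 p * w p := by
  have h := rpow_w (AA_pos hp) (-(1 : ℝ) / 4) (-(5 : ℝ) / 4) 1 (by norm_num)
  rw [h, AA_deriv' hp]
  unfold s1
  have := w_pos hp
  generalize AA (p 0) ^ (-(1 : ℝ) / 4) = t
  rw [AA_eq]
  field_simp
  norm_num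
  ring

lemma A34 {p : Pt} (hp : p ∈ UU) :
    AA (p 0) ^ ((3 : ℝ) / 4) = 3 / 16 * w p ^ 2 * s1 p := by
  have h := Real.rpow_add (AA_pos hp) (-(1 : ℝ) / 4) 1
  norm_num at h
  rw [h]
  unfold s1
  rw [← AA_eq]
  norm_num
  ring

lemma hd_s1 : ∀ p ∈ UU, ∀ i, pd i s1 p = if i = 0 then (1 / 2) * s1 p * w p else 0 := by
  intro p hp i
  have h := (AA_deriv hp).rpow_const (p := -(1 : ℝ) / 4) (Or.inl (ne_of_gt (AA_pos hp)))
  have h2 := pd_u (s := fun u => AA u ^ (-(1 : ℝ) / 4)) h i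
  have h3 : s1 = fun q : Pt => AA (q 0) ^ (-(1 : ℝ) / 4) := rfl
  rw [h3, h2]
  congr 1
  have h4 := A54 hp
  rw [AA_deriv' hp] at h4
  have h5 : (-(1 : ℝ) / 4 - 1) = -(5 : ℝ) / 4 := by norm_num
  rw [h5]
  unfold s1 w at h4
  unfold w
  linear_combination (-(1 : ℝ) / 4) * h4

lemma comp1 : ∀ p ∈ UU,
      KTone AA p 0 0 = -(1 / 4) * s1 p * w p ^ 2 * p 2 * p 3 * p 1 - (3 / 16) * s1 p * w p ^ 3 * p 2 * p 3 * ((p 2) ^ 2 + (p 3) ^ 2) ∧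
      KTone AA p 0 1 = - s1 p * w p * p 2 * p 3 ∧
      KTone AA p 0 2 = (1 / 2) * s1 p * w p * p 3 * p 1 + (1 / 16) * s1 p * w p ^ 2 * p 3 * (3 * p 2 ^ 2 + p 3 ^ 2) ∧
      KTone AA p 0 3 = (1 / 2) * s1 p * w p * p 2 * p 1 + (1 / 16) * s1 p * w p ^ 2 * p 2 * (p 2 ^ 2 + 3 * p 3 ^ 2) ∧
      KTone AA p 1 1 = 0 ∧
      KTone AA p 1 2 = s1 p * p 3 ∧
      KTone AA p 1 3 = s1 p * p 2 ∧
      KTone AA p 2 2 = 0 ∧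
      KTone AA p 2 3 = -2 * s1 p * p 1 ∧
      KTone AA p 3 3 = 0 := by
  intro p hp
  have h2 := A34 hp
  have h3 := AA_deriv' hp
  have h4 : AA (p 0) ^ (-(1 : ℝ) / 4) = s1 p := rfl
  have hw := w_pos hp
  have h1 : AA (p 0) ^ (-(5 : ℝ) / 4) = 16 / 3 * s1 p * (w p ^ 2)⁻¹ := by
    have h := A54 hp
    rw [h3] at h
    field_simp
    field_simp at h
    linarith
  refine ⟨?_, ?_, ?_, ?_, ?_, ?_, ?_, ?_, ?_, ?_⟩ <;>
  · simp only [KTone, sd, kd, f01, f02, f03, f10, f12, f13, f20, f21, f23, f30, f31, f32,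
      if_true, if_false, eq_self_iff_true, h1, h2, h3, h4]
    first | ring1 | (field_simp; ring)

lemma comp2 : ∀ p ∈ UU,
      KTtwo p 0 0 = -(1 / 8) * (p 0) ^ ((1 : ℝ) / 2) * w p ^ 2 * p 1 * p 2 ^ 2 - (3 / 32) * (p 0) ^ ((1 : ℝ) / 2) * w p ^ 3 * p 2 ^ 2 * ((p 2) ^ 2 + (p 3) ^ 2) ∧
      KTtwo p 0 1 = -(1 / 2) * (p 0) ^ ((1 : ℝ) / 2) * w p * p 2 ^ 2 ∧
      KTtwo p 0 2 = (1 / 2) * (p 0) ^ ((1 : ℝ) / 2) * w p * p 1 * p 2 + (1 / 8) * (p 0) ^ ((1 : ℝ) / 2) * w p ^ 2 * p 2 ^ 3 + (1 / 16) * (p 0) ^ ((1 : ℝ) / 2) * w p ^ 2 * p 2 * p 3 ^ 2 ∧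
      KTtwo p 0 3 = (1 / 16) * (p 0) ^ ((1 : ℝ) / 2) * w p ^ 2 * p 2 ^ 2 * p 3 ∧
      KTtwo p 1 1 = 0 ∧
      KTtwo p 1 2 = (p 0) ^ ((1 : ℝ) / 2) * p 2 ∧
      KTtwo p 1 3 = 0 ∧
      KTtwo p 2 2 = -2 * (p 0) ^ ((1 : ℝ) / 2) * p 1 + (1 / 4) * (p 0) ^ ((1 : ℝ) / 2) * w p * p 3 ^ 2 ∧
      KTtwo p 2 3 = -(1 / 4) * (p 0) ^ ((1 : ℝ) / 2) * w p * p 2 * p 3 ∧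
      KTtwo p 3 3 = (1 / 4) * (p 0) ^ ((1 : ℝ) / 2) * w p * p 2 ^ 2 := by
  intro p hp
  have h1 : (p 0) ^ (-(1 : ℝ) / 2) = (p 0) ^ ((1 : ℝ) / 2) * w p ^ 1 :=
    rpow_w hp _ _ 1 (by norm_num)
  have h2 : (p 0) ^ (-(3 : ℝ) / 2) = (p 0) ^ ((1 : ℝ) / 2) * w p ^ 2 :=
    rpow_w hp _ _ 2 (by norm_num)
  have h3 : (p 0) ^ (-(5 : ℝ) / 2) = (p 0) ^ ((1 : ℝ) / 2) * w p ^ 3 :=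
    rpow_w hp _ _ 3 (by norm_num)
  refine ⟨?_, ?_, ?_, ?_, ?_, ?_, ?_, ?_, ?_, ?_⟩ <;>
  · simp only [KTtwo, sd, kd, f01, f02, f03, f10, f12, f13, f20, f21, f23, f30, f31, f32,
      if_true, if_false, eq_self_iff_true, h1, h2, h3]
    ring

lemma comp3 : ∀ p ∈ UU,
      swapYZ KTtwo p 0 0 = -(1 / 8) * (p 0) ^ ((1 : ℝ) / 2) * w p ^ 2 * p 1 * p 3 ^ 2 - (3 / 32) * (p 0) ^ ((1 : ℝ) / 2) * w p ^ 3 * p 3 ^ 2 * ((p 3) ^ 2 + (p 2) ^ 2) ∧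
      swapYZ KTtwo p 0 1 = -(1 / 2) * (p 0) ^ ((1 : ℝ) / 2) * w p * p 3 ^ 2 ∧
      swapYZ KTtwo p 0 2 = (1 / 16) * (p 0) ^ ((1 : ℝ) / 2) * w p ^ 2 * p 3 ^ 2 * p 2 ∧
      swapYZ KTtwo p 0 3 = (1 / 2) * (p 0) ^ ((1 : ℝ) / 2) * w p * p 1 * p 3 + (1 / 8) * (p 0) ^ ((1 : ℝ) / 2) * w p ^ 2 * p 3 ^ 3 + (1 / 16) * (p 0) ^ ((1 : ℝ) / 2) * w p ^ 2 * p 3 * p 2 ^ 2 ∧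
      swapYZ KTtwo p 1 1 = 0 ∧
      swapYZ KTtwo p 1 2 = 0 ∧
      swapYZ KTtwo p 1 3 = (p 0) ^ ((1 : ℝ) / 2) * p 3 ∧
      swapYZ KTtwo p 2 2 = (1 / 4) * (p 0) ^ ((1 : ℝ) / 2) * w p * p 3 ^ 2 ∧
      swapYZ KTtwo p 2 3 = -(1 / 4) * (p 0) ^ ((1 : ℝ) / 2) * w p * p 3 * p 2 ∧
      swapYZ KTtwo p 3 3 = -2 * (p 0) ^ ((1 : ℝ) / 2) * p 1 + (1 / 4) * (p 0) ^ ((1 : ℝ) / 2) * w p * p 2 ^ 2 := by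
  intro p hp
  have h1 : (p 0) ^ (-(1 : ℝ) / 2) = (p 0) ^ ((1 : ℝ) / 2) * w p ^ 1 :=
    rpow_w hp _ _ 1 (by norm_num)
  have h2 : (p 0) ^ (-(3 : ℝ) / 2) = (p 0) ^ ((1 : ℝ) / 2) * w p ^ 2 :=
    rpow_w hp _ _ 2 (by norm_num)
  have h3 : (p 0) ^ (-(5 : ℝ) / 2) = (p 0) ^ ((1 : ℝ) / 2) * w p ^ 3 :=
    rpow_w hp _ _ 3 (by norm_num)
  refine ⟨?_, ?_, ?_, ?_, ?_, ?_, ?_, ?_, ?_, ?_⟩ <;>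
  · simp only [swapYZ, swp0, swp1, swp2, swp3, KTtwo, sd, kd, f01, f02, f03, f10, f12, f13, f20, f21, f23, f30, f31, f32,
      if_true, if_false, eq_self_iff_true, h1, h2, h3]
    ring

lemma comp4 : ∀ p ∈ UU,
      KTfour p 0 0 = -(3 / 16) * w p ^ 2 * p 1 * ((p 2) ^ 2 + (p 3) ^ 2) + (7 / 128) * w p ^ 3 * ((p 2) ^ 2 + (p 3) ^ 2) ^ 2 ∧
      KTfour p 0 1 = - p 1 + (3 / 8) * w p * ((p 2) ^ 2 + (p 3) ^ 2) ∧
      KTfour p 0 2 = -(1 / 16) * w p ^ 2 * p 2 * ((p 2) ^ 2 + (p 3) ^ 2) ∧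
      KTfour p 0 3 = -(1 / 16) * w p ^ 2 * p 3 * ((p 2) ^ 2 + (p 3) ^ 2) ∧
      KTfour p 1 1 = 2 * p 0 ∧
      KTfour p 1 2 = -(1 / 2) * p 2 ∧
      KTfour p 1 3 = -(1 / 2) * p 3 ∧
      KTfour p 2 2 = p 1 - (1 / 8) * w p * p 3 ^ 2 ∧
      KTfour p 2 3 = (1 / 8) * w p * p 2 * p 3 ∧
      KTfour p 3 3 = p 1 - (1 / 8) * w p * p 2 ^ 2 := by
  intro p hp
  refine ⟨?_, ?_, ?_, ?_, ?_, ?_, ?_, ?_, ?_, ?_⟩ <;>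
  · simp only [KTfour, w, sd, kd, f01, f02, f03, f10, f12, f13, f20, f21, f23, f30, f31, f32,
      if_true, if_false, eq_self_iff_true, inv_pow]
    ring

lemma comp8 : ∀ p ∈ UU,
      KTeight AA GG p 0 0 = -(5 / 32) * (p 0) ^ ((3 : ℝ) / 4) * w p ^ 3 * p 2 * ((p 2) ^ 2 + (p 3) ^ 2) ∧
      KTeight AA GG p 0 1 = -(3 / 4) * (p 0) ^ ((3 : ℝ) / 4) * w p * p 2 ∧
      KTeight AA GG p 0 2 = (1 / 16) * (p 0) ^ ((3 : ℝ) / 4) * w p ^ 2 * (3 * p 2 ^ 2 + 2 * p 3 ^ 2) ∧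
      KTeight AA GG p 0 3 = (1 / 16) * (p 0) ^ ((3 : ℝ) / 4) * w p ^ 2 * p 2 * p 3 ∧
      KTeight AA GG p 1 1 = 0 ∧
      KTeight AA GG p 1 2 = (p 0) ^ ((3 : ℝ) / 4) ∧
      KTeight AA GG p 1 3 = 0 ∧
      KTeight AA GG p 2 2 = 0 ∧
      KTeight AA GG p 2 3 = -(1 / 4) * (p 0) ^ ((3 : ℝ) / 4) * w p * p 3 ∧
      KTeight AA GG p 3 3 = (1 / 2) * (p 0) ^ ((3 : ℝ) / 4) * w p * p 2 := by
  intro p hp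
  have h1 := AA_eq p
  have h2 := AA_deriv' hp
  have h3 := GG_deriv' hp
  have h4 : GG (p 0) = (p 0) ^ ((3 : ℝ) / 4) := rfl
  refine ⟨?_, ?_, ?_, ?_, ?_, ?_, ?_, ?_, ?_, ?_⟩ <;>
  · simp only [KTeight, sd, kd, f01, f02, f03, f10, f12, f13, f20, f21, f23, f30, f31, f32,
      if_true, if_false, eq_self_iff_true, h1, h2, h3, h4]
    ring

lemma comp10 : ∀ p ∈ UU,
      swapYZ (KTeight AA GG) p 0 0 = -(5 / 32) * (p 0) ^ ((3 : ℝ) / 4) * w p ^ 3 * p 3 * ((p 3) ^ 2 + (p 2) ^ 2) ∧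
      swapYZ (KTeight AA GG) p 0 1 = -(3 / 4) * (p 0) ^ ((3 : ℝ) / 4) * w p * p 3 ∧
      swapYZ (KTeight AA GG) p 0 2 = (1 / 16) * (p 0) ^ ((3 : ℝ) / 4) * w p ^ 2 * p 3 * p 2 ∧
      swapYZ (KTeight AA GG) p 0 3 = (1 / 16) * (p 0) ^ ((3 : ℝ) / 4) * w p ^ 2 * (3 * p 3 ^ 2 + 2 * p 2 ^ 2) ∧
      swapYZ (KTeight AA GG) p 1 1 = 0 ∧
      swapYZ (KTeight AA GG) p 1 2 = 0 ∧
      swapYZ (KTeight AA GG) p 1 3 = (p 0) ^ ((3 : ℝ) / 4) ∧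
      swapYZ (KTeight AA GG) p 2 2 = (1 / 2) * (p 0) ^ ((3 : ℝ) / 4) * w p * p 3 ∧
      swapYZ (KTeight AA GG) p 2 3 = -(1 / 4) * (p 0) ^ ((3 : ℝ) / 4) * w p * p 2 ∧
      swapYZ (KTeight AA GG) p 3 3 = 0 := by
  intro p hp
  have h1 := AA_eq p
  have h2 := AA_deriv' hp
  have h3 := GG_deriv' hp
  have h4 : GG (p 0) = (p 0) ^ ((3 : ℝ) / 4) := rfl
  refine ⟨?_, ?_, ?_, ?_, ?_, ?_, ?_, ?_, ?_, ?_⟩ <;>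
  · simp only [swapYZ, swp0, swp1, swp2, swp3, KTeight, sd, kd, f01, f02, f03, f10, f12, f13, f20, f21, f23, f30, f31, f32,
      if_true, if_false, eq_self_iff_true, h1, h2, h3, h4]
    ring


lemma sym1 (p : Pt) (a b : Fin 4) : KTone AA p a b = KTone AA p b a := by
  have := fun i j => sd_symm i j a b
  simp only [KTone, this]

lemma sym2 (p : Pt) (a b : Fin 4) : KTtwo p a b = KTtwo p b a := by
  have := fun i j => sd_symm i j a b
  simp only [KTtwo, this]

lemma sym4 (p : Pt) (a b : Fin 4) : KTfour p a b = KTfour p b a := by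
  have := fun i j => sd_symm i j a b
  simp only [KTfour, this]

lemma sym8 (p : Pt) (a b : Fin 4) : KTeight AA GG p a b = KTeight AA GG p b a := by
  have := fun i j => sd_symm i j a b
  simp only [KTeight, this]

lemma main1 : IsKillingTensor HH UU (KTone AA) ∧ ¬ IsReducible HH UU (KTone AA) := by
  refine ⟨kt1 sym1 s1 Sm_s1 hd_s1 comp1, fun h => ?_⟩
  have hp := pt0_mem
  have h1 := red_v h (a := 2) (b := 3) (Or.inl rfl) (Or.inr rfl) pt0 hp
  rw [pd_congr (fun q hq => (comp1 q hq).2.2.2.2.2.2.2.2.1) 1 pt0 hp] at h1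
  have ds := Sm_s1.diff hp
  simp (disch := fun_prop) only [pd_mul, pd_const, pd_coord, hd_s1 pt0 hp, f10, if_true,
    if_false] at h1
  have := s1_pos hp
  linarith

lemma main2 : IsKillingTensor HH UU KTtwo ∧ ¬ IsReducible HH UU KTtwo := by
  refine ⟨kt2 sym2 _ (Sm_rpow _) (hd_rpow _) comp2, fun h => ?_⟩
  have hp := pt0_mem
  have h1 := red_v h (a := 2) (b := 2) (Or.inl rfl) (Or.inl rfl) pt0 hp
  rw [pd_congr (fun q hq => (comp2 q hq).2.2.2.2.2.2.2.1) 1 pt0 hp] at h1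
  have ds := (Sm_rpow (1 / 2)).diff hp
  have hw := Sm_w.diff hp
  simp (disch := fun_prop) only [pd_add, pd_mul, pd_pow, pd_const, pd_coord, hd_rpow _ pt0 hp, pd_w hp,
    f10, f31, if_true, if_false] at h1
  have : 0 < (pt0 0) ^ ((1 : ℝ) / 2) := Real.rpow_pos_of_pos hp _
  linarith

lemma main3 : IsKillingTensor HH UU (swapYZ KTtwo) ∧ ¬ IsReducible HH UU (swapYZ KTtwo) := by
  refine ⟨kt3 (fun p a b => sym2 _ _ _) _ (Sm_rpow _) (hd_rpow _) comp3, fun h => ?_⟩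
  have hp := pt0_mem
  have h1 := red_v h (a := 3) (b := 3) (Or.inr rfl) (Or.inr rfl) pt0 hp
  rw [pd_congr (fun q hq => (comp3 q hq).2.2.2.2.2.2.2.2.2) 1 pt0 hp] at h1
  have ds := (Sm_rpow (1 / 2)).diff hp
  have hw := Sm_w.diff hp
  simp (disch := fun_prop) only [pd_add, pd_mul, pd_pow, pd_const, pd_coord, hd_rpow _ pt0 hp, pd_w hp,
    f10, f21, if_true, if_false] at h1
  have : 0 < (pt0 0) ^ ((1 : ℝ) / 2) := Real.rpow_pos_of_pos hp _
  linarith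

lemma main4 : IsKillingTensor HH UU KTfour ∧ ¬ IsReducible HH UU KTfour := by
  refine ⟨kt4 sym4 comp4, fun h => ?_⟩
  have hp := pt0_mem
  have h1 := red_v h (a := 2) (b := 2) (Or.inl rfl) (Or.inl rfl) pt0 hp
  rw [pd_congr (fun q hq => (comp4 q hq).2.2.2.2.2.2.2.1) 1 pt0 hp] at h1
  have hw := Sm_w.diff hp
  simp (disch := fun_prop) only [pd_sub, pd_mul, pd_pow, pd_const, pd_coord, pd_w hp,
    f10, f31, if_true, if_false] at h1
  linarith

lemma main8 : IsKillingTensor HH UU (KTeight AA GG) ∧ ¬ IsReducible HH UU (KTeight AA GG) := by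
  refine ⟨kt8 sym8 _ (Sm_rpow _) (hd_rpow _) comp8, fun h => ?_⟩
  exact no_ode (Sm_rpow (3 / 4)) (hd_rpow (3 / 4)) f20
    (fun q hq => (comp8 q hq).2.2.2.2.2.2.2.2.2) pt0_mem (Real.rpow_pos_of_pos pt0_mem _)
    (red_ode3 h)

lemma main10 : IsKillingTensor HH UU (swapYZ (KTeight AA GG)) ∧
    ¬ IsReducible HH UU (swapYZ (KTeight AA GG)) := by
  refine ⟨kt10 (fun p a b => sym8 _ _ _) _ (Sm_rpow _) (hd_rpow _) comp10, fun h => ?_⟩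
  exact no_ode (Sm_rpow (3 / 4)) (hd_rpow (3 / 4)) f30
    (fun q hq => (comp10 q hq).2.2.2.2.2.2.2.1) pt0_mem (Real.rpow_pos_of_pos pt0_mem _)
    (red_ode2 h)

end KTP

/-- For the conformally flat plane wave with `A(u) = (3/16)u⁻²` on
`{u > 0}`, the six tensor fields `K₁, K₂, K₃ = K₂(y↔z), K₄, K₈ (with Γ = u^{3/4})` and
`K₁₀ = K₈(y↔z)` are irreducible Killing tensors. -/
theorem stmt7 :
    let U : Set Pt := {p | 0 < p 0}
    let A : ℝ → ℝ := fun u => 3 / 16 / u ^ 2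
    let H : Pt → ℝ := fun p => A (p 0) * ((p 2) ^ 2 + (p 3) ^ 2) / 2
    let Γf : ℝ → ℝ := fun u => u ^ ((3 : ℝ) / 4)
    ∀ K ∈ ({KTone A, KTtwo, swapYZ KTtwo, KTfour, KTeight A Γf,
        swapYZ (KTeight A Γf)} : Set (Pt → Fin 4 → Fin 4 → ℝ)),
      IsKillingTensor H U K ∧ ¬ IsReducible H U K := by
  intro U A H Γf K hK
  simp only [Set.mem_insert_iff, Set.mem_singleton_iff] at hK
  rcases hK with rfl | rfl | rfl | rfl | rfl | rfl
  · exact KTP.main1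
  · exact KTP.main2
  · exact KTP.main3
  · exact KTP.main4
  · exact KTP.main8
  · exact KTP.main10

end
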